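/- arXiv:2203.06095 — 2 statements merged into one kernel-verified Lean document; each statement's English description precedes it below -/
import Mathlib

section
/- Let n ≥ 1 and let z, w : Fin n → {0,1} be two n-bit strings. Let A_{z,w} be the 2^n × 2^n matrix of |z⟩⟨w| + |w⟩⟨z| (entries [a = z ∧ b = w] + [a = w ∧ b = z]) and let B_{z,w} be the matrix of i(|z⟩⟨w| − |w⟩⟨z|) (entries i([a = z ∧ b = w] − [a = w ∧ b = z])). Then: (a) any two Pauli strings with nonvanishing coefficient in B_{z,w} commute, i.e. if trace(P_s · B_{z,w}) ≠ 0 and trace(P_{s'} · B_{z,w}) ≠ 0 then P_s · P_{s'} = P_{s'} · P_s; and (b) if z ≠ w, then any Pauli string with nonvanishing coefficient in A_{z,w} fails to commute with any Pauli string with nonvanishing coefficient in B_{z,w}, i.e. if trace(P_s · A_{z,w}) ≠ 0 and trace(P_{s'} · B_{z,w}) ≠ 0 then P_s · P_{s'} ≠ P_{s'} · P_s. -/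
open Matrix

/-- The four single-qubit Pauli matrices `I, X, Y, Z`. -/
noncomputable def pauli : Fin 4 → Matrix (Fin 2) (Fin 2) ℂ :=
  ![!![1, 0; 0, 1], !![0, 1; 1, 0], !![0, -Complex.I; Complex.I, 0], !![1, 0; 0, -1]]

/-- The Pauli string `σ_{s 0} ⊗ ⋯ ⊗ σ_{s (n-1)}` as a `2^n × 2^n` matrix indexed by
bitstrings. -/
noncomputable def pauliString (n : ℕ) (s : Fin n → Fin 4) :
    Matrix (Fin n → Fin 2) (Fin n → Fin 2) ℂ :=
  Matrix.of fun a b => ∏ i, pauli (s i) (a i) (b i)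

/-- The matrix `|z⟩⟨w| + |w⟩⟨z|`. -/
def ketbraSym {n : ℕ} (z w : Fin n → Fin 2) :
    Matrix (Fin n → Fin 2) (Fin n → Fin 2) ℂ :=
  Matrix.of fun a b =>
    (if a = z ∧ b = w then 1 else 0) + (if a = w ∧ b = z then 1 else 0)

/-- The matrix `i (|z⟩⟨w| - |w⟩⟨z|)`. -/
noncomputable def ketbraAnti {n : ℕ} (z w : Fin n → Fin 2) :
    Matrix (Fin n → Fin 2) (Fin n → Fin 2) ℂ :=
  Matrix.of fun a b =>
    Complex.I * ((if a = z ∧ b = w then 1 else 0) - (if a = w ∧ b = z then 1 else 0))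

/-!
If two Pauli strings `P`, `Q` both have a nonzero `(z, w)` entry, then at each site their factors
are both diagonal (where `z` and `w` agree) or both antidiagonal (where they differ), so `P * Q` is
diagonal and therefore symmetric. A Pauli string with `k` factors `Y` satisfies `Pᵀ = (-1)ᵏ P`, so
if `P` and `Q` have `k` and `l` factors `Y`, transposing `P * Q` yields `P * Q = (-1)ᵏ⁺ˡ Q * P`. The
same transposition rule shows that the coefficient of `P` in `|z⟩⟨w| + |w⟩⟨z|` vanishes unless `k`
is even, and the one in `i(|z⟩⟨w| - |w⟩⟨z|)` unless `k` is odd.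
-/

section PiKronecker

variable {ι R : Type*} [Fintype ι] {l m n : ι → Type*}

/-- The Kronecker product of a finite family of matrices, with rows and columns indexed by
families of row and column indices; it reduces the algebra of Pauli strings to single sites. -/
def piKronecker [CommMonoid R] (M : ∀ i, Matrix (m i) (n i) R) :
    Matrix (∀ i, m i) (∀ i, n i) R :=
  of fun a b => ∏ i, M i (a i) (b i)

theorem piKronecker_transpose [CommMonoid R] (M : ∀ i, Matrix (m i) (n i) R) :
    (piKronecker M)ᵀ = piKronecker fun i => (M i)ᵀ :=
  rfl

theorem piKronecker_smul [CommSemiring R] (c : ι → R) (M : ∀ i, Matrix (m i) (n i) R) :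
    (piKronecker fun i => c i • M i) = (∏ i, c i) • piKronecker M := by
  ext a b
  simp [piKronecker, Finset.prod_mul_distrib]

theorem piKronecker_mul [CommSemiring R] [DecidableEq ι] [∀ i, Fintype (m i)]
    (M : ∀ i, Matrix (l i) (m i) R) (N : ∀ i, Matrix (m i) (n i) R) :
    piKronecker M * piKronecker N = piKronecker fun i => M i * N i := by
  ext a b
  simp [piKronecker, mul_apply, Fintype.prod_sum, Finset.prod_mul_distrib]

theorem isDiag_piKronecker [CommMonoidWithZero R] {M : ∀ i, Matrix (m i) (m i) R}
    (hM : ∀ i, (M i).IsDiag) : (piKronecker M).IsDiag := by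
  intro a b hab
  obtain ⟨i, hi⟩ := Function.ne_iff.mp hab
  exact Finset.prod_eq_zero (Finset.mem_univ i) (hM i hi)

theorem piKronecker_one [CommSemiring R] [∀ i, DecidableEq (m i)] :
    (piKronecker fun i => (1 : Matrix (m i) (m i) R)) = 1 := by
  ext a b
  obtain rfl | hab := eq_or_ne a b
  · simp [piKronecker]
  · rw [isDiag_piKronecker (fun i => isDiag_one) hab, one_apply_ne hab]

end PiKronecker

theorem pauli_transpose (s : Fin 4) :
    (pauli s)ᵀ = (if s = 2 then -1 else 1 : ℂ) • pauli s := by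
  ext a b
  fin_cases s <;> fin_cases a <;> fin_cases b <;> simp [pauli]

theorem pauli_mul_self (s : Fin 4) : pauli s * pauli s = 1 := by
  fin_cases s <;> simp [pauli, one_fin_two]

theorem pauli_apply_ne_zero_iff (s : Fin 4) (a b : Fin 2) :
    pauli s a b ≠ 0 ↔ (a ≠ b ↔ s = 1 ∨ s = 2) := by
  fin_cases s <;> fin_cases a <;> fin_cases b <;> simp [pauli]

theorem isDiag_pauli_mul {s t : Fin 4} {a b : Fin 2} (hs : pauli s a b ≠ 0)
    (ht : pauli t a b ≠ 0) : (pauli s * pauli t).IsDiag := by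
  intro c d hcd
  rw [mul_apply]
  refine Finset.sum_eq_zero fun e _ => ?_
  by_contra hterm
  have hce := (pauli_apply_ne_zero_iff s c e).mp (left_ne_zero_of_mul hterm)
  have hed := (pauli_apply_ne_zero_iff t e d).mp (right_ne_zero_of_mul hterm)
  have hflip : c ≠ e ↔ e ≠ d := by
    rw [hce, hed, ← (pauli_apply_ne_zero_iff s a b).mp hs, (pauli_apply_ne_zero_iff t a b).mp ht]
  lia

/-- The number of factors `Y` in a Pauli string; its parity decides whether the string is a
symmetric or an antisymmetric matrix. -/
def yCount {n : ℕ} (s : Fin n → Fin 4) : ℕ :=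
  Finset.card {i | s i = 2}

section PauliString

variable {n : ℕ} {s t : Fin n → Fin 4} {z w : Fin n → Fin 2}

theorem pauliString_eq_piKronecker (s : Fin n → Fin 4) :
    pauliString n s = piKronecker fun i => pauli (s i) :=
  rfl

theorem pauliString_transpose (s : Fin n → Fin 4) :
    (pauliString n s)ᵀ = (-1 : ℂ) ^ yCount s • pauliString n s := by
  simp_rw [pauliString_eq_piKronecker, piKronecker_transpose, pauli_transpose, piKronecker_smul]
  simp [Finset.prod_ite, yCount]

theorem pauliString_apply_swap (s : Fin n → Fin 4) (z w : Fin n → Fin 2) :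
    pauliString n s w z = (-1) ^ yCount s * pauliString n s z w :=
  congr_fun₂ (pauliString_transpose s) z w

theorem isUnit_pauliString (s : Fin n → Fin 4) : IsUnit (pauliString n s) := by
  refine .of_mul_eq_one (pauliString n s) ?_
  simp_rw [pauliString_eq_piKronecker, piKronecker_mul, pauli_mul_self, piKronecker_one]

theorem pauli_ne_zero_of_pauliString_ne_zero (hs : pauliString n s z w ≠ 0) (i : Fin n) :
    pauli (s i) (z i) (w i) ≠ 0 :=
  fun hi => hs (Finset.prod_eq_zero (Finset.mem_univ i) hi)

theorem isDiag_pauliString_mul (hs : pauliString n s z w ≠ 0) (ht : pauliString n t z w ≠ 0) :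
    (pauliString n s * pauliString n t).IsDiag := by
  rw [pauliString_eq_piKronecker, pauliString_eq_piKronecker, piKronecker_mul]
  exact isDiag_piKronecker fun i =>
    isDiag_pauli_mul (pauli_ne_zero_of_pauliString_ne_zero hs i)
      (pauli_ne_zero_of_pauliString_ne_zero ht i)

theorem pauliString_mul_comm_sign (hs : pauliString n s z w ≠ 0)
    (ht : pauliString n t z w ≠ 0) :
    pauliString n s * pauliString n t =
      (-1 : ℂ) ^ (yCount s + yCount t) • (pauliString n t * pauliString n s) :=
  calc pauliString n s * pauliString n t
    _ = (pauliString n s * pauliString n t)ᵀ := (isDiag_pauliString_mul hs ht).isSymm.eq.symm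
    _ = (pauliString n t)ᵀ * (pauliString n s)ᵀ := transpose_mul _ _
    _ = (-1 : ℂ) ^ (yCount s + yCount t) • (pauliString n t * pauliString n s) := by
      rw [pauliString_transpose, pauliString_transpose, smul_mul_smul_comm, ← pow_add, add_comm]

end PauliString

section Ketbra

variable {n : ℕ} {s : Fin n → Fin 4} {z w : Fin n → Fin 2}

theorem ketbraSym_eq_single_add_single (z w : Fin n → Fin 2) :
    ketbraSym z w = single z w 1 + single w z 1 := by
  ext a b
  simp [ketbraSym, single, eq_comm]

theorem ketbraAnti_eq_smul_single_sub_single (z w : Fin n → Fin 2) :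
    ketbraAnti z w = Complex.I • (single z w 1 - single w z 1) := by
  ext a b
  simp [ketbraAnti, single, eq_comm]

theorem trace_pauliString_mul_ketbraSym (s : Fin n → Fin 4) (z w : Fin n → Fin 2) :
    (pauliString n s * ketbraSym z w).trace = ((-1) ^ yCount s + 1) * pauliString n s z w := by
  rw [ketbraSym_eq_single_add_single, mul_add, trace_add, trace_mul_single, trace_mul_single,
    pauliString_apply_swap s z w]
  simp [add_mul]

theorem trace_pauliString_mul_ketbraAnti (s : Fin n → Fin 4) (z w : Fin n → Fin 2) :
    (pauliString n s * ketbraAnti z w).trace =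
      Complex.I * ((-1) ^ yCount s - 1) * pauliString n s z w := by
  rw [ketbraAnti_eq_smul_single_sub_single, Matrix.mul_smul, trace_smul, mul_sub, trace_sub,
    trace_mul_single, trace_mul_single, pauliString_apply_swap s z w]
  simp [sub_mul, mul_assoc]

theorem trace_pauliString_mul_ketbraSym_ne_zero_iff :
    (pauliString n s * ketbraSym z w).trace ≠ 0 ↔
      Even (yCount s) ∧ pauliString n s z w ≠ 0 := by
  rw [trace_pauliString_mul_ketbraSym, mul_ne_zero_iff]
  refine and_congr_left fun _ => ?_
  obtain h | h := Nat.even_or_odd (yCount s)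
  · simp [h, h.neg_one_pow]
  · simp [h, h.neg_one_pow]

theorem trace_pauliString_mul_ketbraAnti_ne_zero_iff :
    (pauliString n s * ketbraAnti z w).trace ≠ 0 ↔
      Odd (yCount s) ∧ pauliString n s z w ≠ 0 := by
  rw [trace_pauliString_mul_ketbraAnti, mul_ne_zero_iff]
  refine and_congr_left fun _ => ?_
  obtain h | h := Nat.even_or_odd (yCount s)
  · simp [h, h.neg_one_pow]
  · have : (-1 - 1 : ℂ) ≠ 0 := by norm_num
    simp [h, h.neg_one_pow, this]

end Ketbra

/-- (a) any two Pauli strings with nonvanishing coefficient in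
`i(|z⟩⟨w| - |w⟩⟨z|)` commute; (b) if `z ≠ w`, then any Pauli string with nonvanishing
coefficient in `|z⟩⟨w| + |w⟩⟨z|` fails to commute with any Pauli string with
nonvanishing coefficient in `i(|z⟩⟨w| - |w⟩⟨z|)`. -/
theorem pauli_strings_ketbra_commutation (n : ℕ) (hn : 1 ≤ n)
    (z w : Fin n → Fin 2) :
    (∀ s s' : Fin n → Fin 4,
      (pauliString n s * ketbraAnti z w).trace ≠ 0 →
      (pauliString n s' * ketbraAnti z w).trace ≠ 0 →
      pauliString n s * pauliString n s' = pauliString n s' * pauliString n s) ∧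
    (z ≠ w → ∀ s s' : Fin n → Fin 4,
      (pauliString n s * ketbraSym z w).trace ≠ 0 →
      (pauliString n s' * ketbraAnti z w).trace ≠ 0 →
      pauliString n s * pauliString n s' ≠ pauliString n s' * pauliString n s) := by
  refine ⟨fun s s' h h' => ?_, fun _ s s' h h' hcomm => ?_⟩
  · obtain ⟨hodd, hs⟩ := trace_pauliString_mul_ketbraAnti_ne_zero_iff.mp h
    obtain ⟨hodd', hs'⟩ := trace_pauliString_mul_ketbraAnti_ne_zero_iff.mp h'
    rw [pauliString_mul_comm_sign hs hs', (hodd.add_odd hodd').neg_one_pow, one_smul]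
  · obtain ⟨heven, hs⟩ := trace_pauliString_mul_ketbraSym_ne_zero_iff.mp h
    obtain ⟨hodd', hs'⟩ := trace_pauliString_mul_ketbraAnti_ne_zero_iff.mp h'
    have hanti := pauliString_mul_comm_sign hs hs'
    rw [(heven.add_odd hodd').neg_one_pow, neg_one_smul, hcomm] at hanti
    have : IsAddTorsionFree (Matrix (Fin n → Fin 2) (Fin n → Fin 2) ℂ) := .of_module_rat _
    exact ((isUnit_pauliString s').mul (isUnit_pauliString s)).ne_zero (self_eq_neg.mp hanti)
end

section
/- Let n ≥ 1 and, for d ∈ ℕ, let A_d be the real 2^n × 2^n matrix indexed by bitstrings a, b : Fin n → {0,1} whose (a,b) entry is 1 if the Hamming distance between a and b equals d, and 0 otherwise. Then for every k ≥ 1 there exist real coefficients c_0, c_1, …, c_{k−1} such that A_1^k = Σ_{j=0}^{k−1} c_j·A_j + k!·A_k. In particular, for k ≤ n the k-th power of the Hamming-distance-one matrix has nonzero entries at all pairs of bitstrings at Hamming distance k. -/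
open Matrix

/-- `hamMat n d` is the `2^n × 2^n` real matrix whose `(a,b)` entry is `1` if the
Hamming distance between the bitstrings `a` and `b` equals `d`, and `0` otherwise
(the matrix `T_{Ham(d)} = A_d`). -/
def hamMat (n d : ℕ) : Matrix (Fin n → Fin 2) (Fin n → Fin 2) ℝ :=
  Matrix.of fun a b => if hammingDist a b = d then 1 else 0

/-!
Over an alphabet of `q` letters, a word `a` of length `n` at distance `d` from `b` has `d`
neighbours at distance `d - 1` from `b`, `d (q - 2)` at distance `d`, and `(n - d) (q - 1)` at
distance `d + 1`. Hence the number of walks of length `k` from `a` to `b` depends only on `d`. It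
vanishes for `k < d`, and for `k = d` it is `k!`, because then every step must decrease the
distance.
-/

open Finset Function
open scoped Nat

section Words

variable {ι : Type*} [Fintype ι] [DecidableEq ι] {β : ι → Type*} [∀ i, DecidableEq (β i)]

lemma hammingDist_update_left_add (a b : ∀ i, β i) (i : ι) (x : β i) :
    hammingDist (update a i x) b + (if a i ≠ b i then 1 else 0) =
      hammingDist a b + if x ≠ b i then 1 else 0 := by
  have off_i : ∀ j ∈ ({i}ᶜ : Finset ι),
      (if update a i x j ≠ b j then 1 else 0) = if a j ≠ b j then 1 else 0 := by
    intro j hj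
    rw [update_of_ne (by simpa using hj)]
  simp only [hammingDist, card_filter]
  rw [Fintype.sum_eq_add_sum_compl i, Fintype.sum_eq_add_sum_compl i, sum_congr rfl off_i,
    update_self]
  ring

lemma hammingDist_eq_one_iff_exists_update {a c : ∀ i, β i} :
    hammingDist a c = 1 ↔ ∃ i, ∃ x ≠ a i, update a i x = c := by
  constructor
  · intro h
    obtain ⟨i, hi⟩ := card_eq_one.1 h
    have differ_iff (j : ι) : a j ≠ c j ↔ j = i := by
      simpa using Finset.ext_iff.1 hi j
    refine ⟨i, c i, ((differ_iff i).2 rfl).symm, update_eq_iff.2 ⟨rfl, fun j hj => ?_⟩⟩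
    exact not_ne_iff.1 (mt (differ_iff j).1 hj)
  · rintro ⟨i, x, hx, rfl⟩
    have h := hammingDist_update_left_add a a i x
    rw [hammingDist_comm]
    simpa [hx] using h

lemma sum_hammingDist_eq_one [∀ i, Fintype (β i)] {M : Type*} [AddCommMonoid M]
    (a : ∀ i, β i) (f : (∀ i, β i) → M) :
    ∑ c with hammingDist a c = 1, f c = ∑ i, ∑ x ∈ univ.erase (a i), f (update a i x) := by
  rw [sum_sigma']
  symm
  refine sum_nbij (fun p => update a p.1 p.2) ?_ ?_ ?_ fun _ _ => rfl
  · rintro ⟨i, x⟩ hx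
    simpa [hammingDist_eq_one_iff_exists_update] using ⟨i, x, by simpa using hx, rfl⟩
  · rintro ⟨i, x⟩ hx ⟨j, y⟩ - hxy
    obtain rfl | hij := eq_or_ne i j
    · exact congrArg (Sigma.mk i) (update_injective a i hxy)
    · have : x = a i := by simpa [hij] using congrFun hxy i
      simp [this] at hx
  · intro c hc
    obtain ⟨i, x, hx, rfl⟩ := hammingDist_eq_one_iff_exists_update.1 (by simpa using hc)
    exact ⟨⟨i, x⟩, by simpa using hx, rfl⟩

lemma sum_erase_hammingDist_update_of_eq {M : Type*} [AddCommMonoid M] (f : ℕ → M)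
    {a b : ∀ i, β i} {i : ι} [Fintype (β i)] (h : a i = b i) :
    ∑ x ∈ univ.erase (a i), f (hammingDist (update a i x) b) =
      (Fintype.card (β i) - 1) • f (hammingDist a b + 1) := by
  have dist_update : ∀ x ∈ univ.erase (a i),
      hammingDist (update a i x) b = hammingDist a b + 1 := by
    intro x hx
    have hxb : x ≠ b i := h ▸ ne_of_mem_erase hx
    simpa [h, hxb] using hammingDist_update_left_add a b i x
  rw [sum_congr rfl fun x hx => congrArg f (dist_update x hx), sum_const,
    card_erase_of_mem (mem_univ _), card_univ]

lemma sum_erase_hammingDist_update_of_ne {M : Type*} [AddCommMonoid M] (f : ℕ → M)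
    {a b : ∀ i, β i} {i : ι} [Fintype (β i)] (h : a i ≠ b i) :
    ∑ x ∈ univ.erase (a i), f (hammingDist (update a i x) b) =
      f (hammingDist a b - 1) + (Fintype.card (β i) - 2) • f (hammingDist a b) := by
  have b_mem : b i ∈ univ.erase (a i) := mem_erase.2 ⟨h.symm, mem_univ _⟩
  have dist_update_b : hammingDist (update a i (b i)) b = hammingDist a b - 1 := by
    have := hammingDist_update_left_add a b i (b i)
    simp only [h, ne_eq, not_false_eq_true, not_true_eq_false, if_true, if_false] at this
    omega
  have dist_update : ∀ x ∈ (univ.erase (a i)).erase (b i),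
      hammingDist (update a i x) b = hammingDist a b := by
    intro x hx
    simpa [h, ne_of_mem_erase hx] using hammingDist_update_left_add a b i x
  rw [← add_sum_erase _ _ b_mem, dist_update_b,
    sum_congr rfl fun x hx => congrArg f (dist_update x hx), sum_const,
    card_erase_of_mem b_mem, card_erase_of_mem (mem_univ _), card_univ, Nat.sub_sub]

lemma sum_hammingDist_eq_one_hammingDist {α : Type*} [Fintype α] [DecidableEq α]
    {M : Type*} [AddCommMonoid M] (f : ℕ → M) (a b : ι → α) :
    ∑ c with hammingDist a c = 1, f (hammingDist c b) =
      hammingDist a b •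
          (f (hammingDist a b - 1) + (Fintype.card α - 2) • f (hammingDist a b)) +
        (Fintype.card ι - hammingDist a b) •
          ((Fintype.card α - 1) • f (hammingDist a b + 1)) := by
  have card_differ : #{i | a i ≠ b i} = hammingDist a b := rfl
  have card_agree : #{i | ¬a i ≠ b i} = Fintype.card ι - hammingDist a b := by
    rw [filter_not, ← compl_eq_univ_sdiff, card_compl, card_differ]
  rw [sum_hammingDist_eq_one, ← sum_filter_add_sum_filter_not univ fun i => a i ≠ b i,
    sum_congr rfl fun i hi => sum_erase_hammingDist_update_of_ne f (mem_filter.1 hi).2,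
    sum_congr rfl fun i hi =>
      sum_erase_hammingDist_update_of_eq f (not_ne_iff.1 (mem_filter.1 hi).2),
    sum_const, sum_const, card_differ, card_agree]

end Words

/-- The number of walks of length `k` in the Hamming graph on words of length `n` over `q` letters
between two words at distance `d`. The truncated subtractions are harmless: for words at distance
`d` one has `d ≤ n`, and `0 < d` forces `2 ≤ q`. -/
def hammingWalkCount (n q : ℕ) : ℕ → ℕ → ℕ
  | 0, d => if d = 0 then 1 else 0
  | k + 1, d =>
    d * (hammingWalkCount n q k (d - 1) + (q - 2) * hammingWalkCount n q k d) +
      (n - d) * ((q - 1) * hammingWalkCount n q k (d + 1))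

lemma hammingWalkCount_of_lt (n q : ℕ) {k d : ℕ} (h : k < d) : hammingWalkCount n q k d = 0 := by
  induction k generalizing d with
  | zero => simp [hammingWalkCount, h.ne']
  | succ k ih =>
    rw [hammingWalkCount, ih (by omega), ih (by omega), ih (by omega)]
    simp

lemma hammingWalkCount_self (n q k : ℕ) : hammingWalkCount n q k k = k ! := by
  induction k with
  | zero => simp [hammingWalkCount]
  | succ k ih =>
    rw [hammingWalkCount, Nat.add_sub_cancel, ih, hammingWalkCount_of_lt n q (by omega),
      hammingWalkCount_of_lt n q (by omega), Nat.factorial_succ]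
    simp

/-- The `d`-th adjacency matrix of the Hamming scheme on words `ι → α`. It agrees with `hamMat`
on bitstrings, but has an arbitrary index set, alphabet and coefficient ring. -/
def hammingMatrix (ι α R : Type*) [Fintype ι] [DecidableEq α] [Zero R] [One R] (d : ℕ) :
    Matrix (ι → α) (ι → α) R :=
  Matrix.of fun a b => if hammingDist a b = d then 1 else 0

lemma hammingMatrix_apply {ι α R : Type*} [Fintype ι] [DecidableEq α] [Zero R] [One R] (d : ℕ)
    (a b : ι → α) : hammingMatrix ι α R d a b = if hammingDist a b = d then 1 else 0 :=
  rfl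

section Powers

variable {ι α : Type*} [Fintype ι] [DecidableEq ι] [Fintype α] [DecidableEq α]
  {R : Type*} [Semiring R]

lemma hammingMatrix_one_pow_apply (k : ℕ) (a b : ι → α) :
    (hammingMatrix ι α R 1 ^ k) a b =
      hammingWalkCount (Fintype.card ι) (Fintype.card α) k (hammingDist a b) := by
  induction k generalizing a with
  | zero => simp [hammingWalkCount, Matrix.one_apply]
  | succ k ih =>
    calc (hammingMatrix ι α R 1 ^ (k + 1)) a b
      _ = ∑ c with hammingDist a c = 1,
          (hammingWalkCount (Fintype.card ι) (Fintype.card α) k (hammingDist c b) : R) := by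
        simp only [pow_succ', Matrix.mul_apply, ih, hammingMatrix_apply, ite_mul,
          one_mul, zero_mul, sum_filter]
      _ = hammingWalkCount (Fintype.card ι) (Fintype.card α) (k + 1) (hammingDist a b) := by
        simp only [← Nat.cast_sum, sum_hammingDist_eq_one_hammingDist, smul_eq_mul,
          hammingWalkCount]

lemma hammingMatrix_one_pow_eq_sum (k : ℕ) :
    hammingMatrix ι α R 1 ^ k = ∑ j ∈ range (k + 1),
      (hammingWalkCount (Fintype.card ι) (Fintype.card α) k j : R) • hammingMatrix ι α R j := by
  ext a b
  simp only [hammingMatrix_one_pow_apply, Matrix.sum_apply, Matrix.smul_apply,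
    hammingMatrix_apply, smul_eq_mul, mul_ite, mul_one, mul_zero, sum_ite_eq, mem_range]
  split_ifs with h
  · rfl
  · rw [hammingWalkCount_of_lt _ _ (by omega), Nat.cast_zero]

theorem hamming_one_pow_general (k : ℕ) :
    (∃ c : ℕ → R, hammingMatrix ι α R 1 ^ k =
      ∑ j ∈ range k, c j • hammingMatrix ι α R j + (k ! : R) • hammingMatrix ι α R k) ∧
    ∀ a b : ι → α, hammingDist a b = k → (hammingMatrix ι α R 1 ^ k) a b = k ! := by
  refine ⟨⟨fun j => hammingWalkCount (Fintype.card ι) (Fintype.card α) k j, ?_⟩, ?_⟩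
  · rw [hammingMatrix_one_pow_eq_sum, sum_range_succ, hammingWalkCount_self]
  · intro a b h
    rw [hammingMatrix_one_pow_apply, h, hammingWalkCount_self]

end Powers

/-- For every `k ≥ 1` there exist real coefficients `c_0, …, c_{k-1}` with
`A_1 ^ k = Σ_{j<k} c_j • A_j + k! • A_k`; in particular, for `k ≤ n` the `k`-th power of
the Hamming distance one matrix is nonzero at every pair of bitstrings at Hamming
distance `k`. -/
theorem hamming_one_pow (n : ℕ) (hn : 1 ≤ n) (k : ℕ) (hk : 1 ≤ k) :
    (∃ c : ℕ → ℝ, hamMat n 1 ^ k =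
        (∑ j ∈ Finset.range k, c j • hamMat n j) + ((Nat.factorial k : ℕ) : ℝ) • hamMat n k) ∧
    (k ≤ n → ∀ a b : Fin n → Fin 2, hammingDist a b = k → (hamMat n 1 ^ k) a b ≠ 0) := by
  obtain ⟨expansion, entry⟩ := hamming_one_pow_general (ι := Fin n) (α := Fin 2) (R := ℝ) k
  exact ⟨expansion, fun _ a b h => (entry a b h).trans_ne (by positivity)⟩
end
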